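/- arXiv:2311.00235 — 2 statements merged into one kernel-verified Lean document; each statement's English description precedes it below -/
import Mathlib

section
/- Let L : ℝ^n → ℝ be three times continuously differentiable with bounded first, second and third derivatives. Fix θ₀ ∈ ℝ^n and define the gradient descent iterate θ'(h) = θ₀ − h ∇L(θ₀). For each h > 0 let θ̃_h : [0, h] → ℝ^n be the solution of the modified gradient flow θ̇(t) = −∇L(θ(t)) − (h/4) ∇(‖∇L(θ(t))‖²) with θ̃_h(0) = θ₀. Then there exist constants C > 0 and h₀ > 0 such that for all h ∈ (0, h₀), ‖θ̃_h(h) − θ'(h)‖ ≤ C h³. -/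
open Set

/-!
Let `F = Df · f`. By Taylor expansion, the flow of `f` at time `h` is the Euler step plus
`(h² / 2) F + O(h³)`. Subtracting `(h / 2) F` from the vector field changes the position at time `h`
by `-(h² / 2) F + O(h³)` and removes this term. For `f = -∇L` the symmetry of the Hessian gives
`F = D(∇L) · ∇L = ½ ∇‖∇L‖²`, so the corrected field is `-∇L - (h / 4) ∇‖∇L‖²`. Only local bounds on
`f` matter, because the velocity is bounded near the initial point and the flow cannot leave a fixed
ball before a short time.
-/

open Metric Topology
open scoped NNReal

section Trapping

variable {E : Type*} [NormedAddCommGroup E] [NormedSpace ℝ E]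

theorem norm_integralCurve_sub_le_of_norm_lt_on_closedBall {γ : ℝ → E} {v : ℝ → E → E}
    {a b r M : ℝ} (hγ : IsIntegralCurveOn γ v (Icc a b)) (hM : 0 ≤ M)
    (hv : ∀ t ∈ Ico a b, ∀ x ∈ closedBall (γ a) r, ‖v t x‖ < M) (hr : M * (b - a) ≤ r)
    {t : ℝ} (ht : t ∈ Icc a b) : ‖γ t - γ a‖ ≤ M * (t - a) := by
  have deriv_sub : ∀ t ∈ Icc a b,
      HasDerivWithinAt (fun t ↦ γ t - γ a) (v t (γ t)) (Icc a b) t :=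
    fun t ht ↦ (hγ t ht).sub_const _
  refine image_norm_le_of_norm_deriv_right_lt_deriv_boundary (B := fun t ↦ M * (t - a))
    (fun t ht ↦ (deriv_sub t ht).continuousWithinAt)
    (fun t ht ↦ (deriv_sub t (Ico_subset_Icc_self ht)).mono_of_mem_nhdsWithin
      (Icc_mem_nhdsGE_of_mem ht))
    (by simp) (fun t ↦ by simpa using ((hasDerivAt_id t).sub_const a).const_mul M) ?_ ht
  intro t ht hboundary
  refine hv t ht _ (mem_closedBall_iff_norm.2 ?_)
  calc ‖γ t - γ a‖ = M * (t - a) := hboundary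
    _ ≤ M * (b - a) := by gcongr; exact ht.2.le
    _ ≤ r := hr

end Trapping

section EulerMethod

variable {E : Type*} [NormedAddCommGroup E] [NormedSpace ℝ E] {f : E → E} {x : E} {h : ℝ}

/-- The acceleration `Df(x) f(x)` of the flow of the vector field `f`: the second time derivative
of an integral curve of `f` passing through `x`. -/
noncomputable def flowAcceleration (f : E → E) (x : E) : E :=
  fderiv ℝ f x (f x)

/-- The vector field `f - (h / 2) Df f` of the first-order modified equation of the explicit Euler
method with step size `h`. -/
noncomputable def eulerModifiedField (f : E → E) (h : ℝ) (x : E) : E :=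
  f x - (h / 2) • flowAcceleration f x

theorem fderiv_eulerModifiedField (f : E → E) (h : ℝ) (x : E) :
    fderiv ℝ f x (eulerModifiedField f h x) =
      flowAcceleration f x - (h / 2) • fderiv ℝ f x (flowAcceleration f x) := by
  rw [eulerModifiedField, map_sub, map_smul, flowAcceleration]

theorem norm_sub_half_smul_le {u w : E} {a b : ℝ} (hh : 0 ≤ h) (hu : ‖u‖ ≤ a) (hw : ‖w‖ ≤ b) :
    ‖u - (h / 2) • w‖ ≤ a + h / 2 * b := by
  refine (norm_sub_le _ _).trans ?_
  rw [norm_smul, Real.norm_of_nonneg (by positivity)]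
  gcongr

/-- The control of the vector field `f` on `s` by a single constant `K` under which the modified
flow stays `O(h³)`-close to the Euler step. The second derivative enters only through the Lipschitz
bound on `flowAcceleration f`. -/
structure EulerRegularOn (f : E → E) (K : ℝ≥0) (s : Set E) : Prop where
  differentiableAt : ∀ x ∈ s, DifferentiableAt ℝ f x
  norm_le : ∀ x ∈ s, ‖f x‖ ≤ K
  norm_fderiv_le : ∀ x ∈ s, ‖fderiv ℝ f x‖ ≤ K
  lipschitzOnWith_flowAcceleration : LipschitzOnWith K (flowAcceleration f) s

theorem exists_eulerRegularOn_nhds (hf : ContDiffAt ℝ 2 f x) :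
    ∃ K > 0, ∃ s ∈ 𝓝 x, EulerRegularOn f K s := by
  have contDiffAt_fderiv : ContDiffAt ℝ 1 (fderiv ℝ f) x := hf.fderiv_right (by norm_num)
  have contDiffAt_flowAcceleration : ContDiffAt ℝ 1 (flowAcceleration f) x :=
    contDiffAt_fderiv.clm_apply (hf.of_le (by norm_num))
  obtain ⟨A, U, hU, hA⟩ := contDiffAt_flowAcceleration.exists_lipschitzOnWith
  let K : ℝ≥0 := A + ‖f x‖₊ + ‖fderiv ℝ f x‖₊ + 1
  have norm_lt : ‖f x‖ < K := by
    simp only [K, NNReal.coe_add, coe_nnnorm, NNReal.coe_one]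
    linarith [A.coe_nonneg, norm_nonneg (fderiv ℝ f x)]
  have norm_fderiv_lt : ‖fderiv ℝ f x‖ < K := by
    simp only [K, NNReal.coe_add, coe_nnnorm, NNReal.coe_one]
    linarith [A.coe_nonneg, norm_nonneg (f x)]
  have A_le : A ≤ K := by simp only [K, add_assoc, le_add_iff_nonneg_right, zero_le]
  have differentiable_near : ∀ᶠ y in 𝓝 x, DifferentiableAt ℝ f y :=
    (hf.eventually (by simp)).mono fun y hy ↦ hy.differentiableAt (by norm_num)
  have norm_le_near : ∀ᶠ y in 𝓝 x, ‖f y‖ ≤ K :=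
    hf.continuousAt.norm.eventually_le_const norm_lt
  have norm_fderiv_le_near : ∀ᶠ y in 𝓝 x, ‖fderiv ℝ f y‖ ≤ K :=
    contDiffAt_fderiv.continuousAt.norm.eventually_le_const norm_fderiv_lt
  refine ⟨K, by positivity, _, Filter.inter_mem hU
    (differentiable_near.and (norm_le_near.and norm_fderiv_le_near)), ?_⟩
  exact
    { differentiableAt := fun y hy ↦ hy.2.1
      norm_le := fun y hy ↦ hy.2.2.1
      norm_fderiv_le := fun y hy ↦ hy.2.2.2
      lipschitzOnWith_flowAcceleration := (hA.weaken A_le).mono inter_subset_left }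

namespace EulerRegularOn

variable {K : ℝ≥0} {s : Set E} {θ : ℝ → E} {t : ℝ}

theorem norm_flowAcceleration_le (hf : EulerRegularOn f K s) (hx : x ∈ s) :
    ‖flowAcceleration f x‖ ≤ K ^ 2 :=
  ((fderiv ℝ f x).le_of_opNorm_le_of_le (hf.norm_fderiv_le x hx) (hf.norm_le x hx)).trans_eq
    (sq _).symm

theorem norm_eulerModifiedField_le (hf : EulerRegularOn f K s) (hx : x ∈ s)
    (hh : h ∈ Icc 0 1) : ‖eulerModifiedField f h x‖ ≤ K + K ^ 2 := by
  refine (norm_sub_half_smul_le hh.1 (hf.norm_le x hx) (hf.norm_flowAcceleration_le hx)).trans ?_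
  gcongr
  exact mul_le_of_le_one_left (by positivity) (by linarith [hh.2])

variable (hf : EulerRegularOn f K s) (hh : h ∈ Icc 0 1) (hs : MapsTo θ (Icc 0 h) s)
  (hθ : IsIntegralCurveOn θ (fun _ ↦ eulerModifiedField f h) (Icc 0 h))

include hf hh hs hθ

theorem norm_sub_initial_le (ht : t ∈ Icc 0 h) : ‖θ t - θ 0‖ ≤ (K + K ^ 2) * h := by
  calc ‖θ t - θ 0‖ ≤ (K + K ^ 2) * (t - 0) :=
        norm_image_sub_le_of_norm_deriv_le_segment' hθ
          (fun t ht ↦ hf.norm_eulerModifiedField_le (hs (Ico_subset_Icc_self ht)) hh) t ht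
    _ ≤ (K + K ^ 2) * h := by rw [sub_zero]; gcongr; exact ht.2

theorem norm_flowAcceleration_sub_initial_le (ht : t ∈ Icc 0 h) :
    ‖flowAcceleration f (θ t) - flowAcceleration f (θ 0)‖ ≤ K * ((K + K ^ 2) * h) := by
  have h0 : (0 : ℝ) ∈ Icc 0 h := left_mem_Icc.2 hh.1
  refine (hf.lipschitzOnWith_flowAcceleration.norm_sub_le (hs ht) (hs h0)).trans ?_
  gcongr
  exact hf.norm_sub_initial_le hh hs hθ ht

theorem norm_field_sub_taylor_le (ht : t ∈ Icc 0 h) :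
    ‖f (θ t) - f (θ 0) - t • flowAcceleration f (θ 0)‖ ≤
      (K * (K + K ^ 2) + K ^ 3 / 2) * h ^ 2 := by
  set F := flowAcceleration f
  have deriv_remainder : ∀ t ∈ Icc 0 h, HasDerivWithinAt (fun t ↦ f (θ t) - t • F (θ 0))
      (F (θ t) - F (θ 0) - (h / 2) • fderiv ℝ f (θ t) (F (θ t))) (Icc 0 h) t := by
    intro t ht
    refine (((hf.differentiableAt _ (hs ht)).hasFDerivAt.comp_hasDerivWithinAt t (hθ t ht)).sub
      ((hasDerivWithinAt_id t _).smul_const (F (θ 0)))).congr_deriv ?_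
    rw [fderiv_eulerModifiedField, one_smul, sub_right_comm]
  have deriv_bound : ∀ t ∈ Ico 0 h,
      ‖F (θ t) - F (θ 0) - (h / 2) • fderiv ℝ f (θ t) (F (θ t))‖ ≤
        K * ((K + K ^ 2) * h) + h / 2 * (K * K ^ 2) := fun t ht ↦
    have hst := hs (Ico_subset_Icc_self ht)
    norm_sub_half_smul_le hh.1
      (hf.norm_flowAcceleration_sub_initial_le hh hs hθ (Ico_subset_Icc_self ht))
      ((fderiv ℝ f (θ t)).le_of_opNorm_le_of_le (hf.norm_fderiv_le _ hst)
        (hf.norm_flowAcceleration_le hst))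
  calc ‖f (θ t) - f (θ 0) - t • F (θ 0)‖
      = ‖f (θ t) - t • F (θ 0) - (f (θ 0) - (0 : ℝ) • F (θ 0))‖ := by congr 1; module
    _ ≤ (K * ((K + K ^ 2) * h) + h / 2 * (K * K ^ 2)) * (t - 0) :=
        norm_image_sub_le_of_norm_deriv_le_segment' deriv_remainder deriv_bound t ht
    _ ≤ (K * ((K + K ^ 2) * h) + h / 2 * (K * K ^ 2)) * h := by
        have := hh.1
        rw [sub_zero]; gcongr; exact ht.2
    _ = (K * (K + K ^ 2) + K ^ 3 / 2) * h ^ 2 := by ring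

theorem norm_sub_eulerStep_le :
    ‖θ h - (θ 0 + h • f (θ 0))‖ ≤ (3 / 2 * (K * (K + K ^ 2)) + K ^ 3 / 2) * h ^ 3 := by
  set F := flowAcceleration f
  -- The coefficient of `F (θ 0)` integrates `t - h / 2`, so it vanishes at both `0` and `h`.
  let e : ℝ → E := fun t ↦ θ t - t • f (θ 0) - (t ^ 2 / 2 - h / 2 * t) • F (θ 0)
  have deriv_e : ∀ t ∈ Icc 0 h, HasDerivWithinAt e
      (f (θ t) - f (θ 0) - t • F (θ 0) - (h / 2) • (F (θ t) - F (θ 0))) (Icc 0 h) t := by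
    intro t ht
    have deriv_coeff : HasDerivAt (fun t : ℝ ↦ t ^ 2 / 2 - h / 2 * t) (t - h / 2) t :=
      (((hasDerivAt_pow 2 t).div_const 2).sub ((hasDerivAt_id t).const_mul (h / 2))).congr_deriv
        (by norm_num)
    refine (((hθ t ht).sub ((hasDerivWithinAt_id t _).smul_const (f (θ 0)))).sub
      (deriv_coeff.hasDerivWithinAt.smul_const (F (θ 0)))).congr_deriv ?_
    simp only [eulerModifiedField, F]
    module
  have deriv_bound : ∀ t ∈ Ico 0 h,
      ‖f (θ t) - f (θ 0) - t • F (θ 0) - (h / 2) • (F (θ t) - F (θ 0))‖ ≤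
        (K * (K + K ^ 2) + K ^ 3 / 2) * h ^ 2 + h / 2 * (K * ((K + K ^ 2) * h)) := fun t ht ↦
    norm_sub_half_smul_le hh.1
      (hf.norm_field_sub_taylor_le hh hs hθ (Ico_subset_Icc_self ht))
      (hf.norm_flowAcceleration_sub_initial_le hh hs hθ (Ico_subset_Icc_self ht))
  calc ‖θ h - (θ 0 + h • f (θ 0))‖ = ‖e h - e 0‖ := by congr 1; simp only [e]; module
    _ ≤ ((K * (K + K ^ 2) + K ^ 3 / 2) * h ^ 2 + h / 2 * (K * ((K + K ^ 2) * h))) * (h - 0) :=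
        norm_image_sub_le_of_norm_deriv_le_segment' deriv_e deriv_bound h (right_mem_Icc.2 hh.1)
    _ = (3 / 2 * (K * (K + K ^ 2)) + K ^ 3 / 2) * h ^ 3 := by ring

end EulerRegularOn

-- `v` is kept apart from the modified field because, for `f = -∇L`, the field written with
-- `∇‖∇L‖²` is known to agree with it only near `x`.
theorem exists_norm_modifiedFlow_sub_eulerStep_le {v : ℝ → E → E} (hf : ContDiffAt ℝ 2 f x)
    (hv : ∀ᶠ y in 𝓝 x, ∀ h, v h y = eulerModifiedField f h y) :
    ∃ C > 0, ∃ h₀ > 0, ∀ h ∈ Ioo 0 h₀, ∀ θ : ℝ → E, θ 0 = x →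
      IsIntegralCurveOn θ (fun _ ↦ v h) (Icc 0 h) →
        ‖θ h - (x + h • f x)‖ ≤ C * h ^ 3 := by
  obtain ⟨K, hK, s, hs, hfs⟩ := exists_eulerRegularOn_nhds hf
  obtain ⟨r, hr, hball⟩ := nhds_basis_closedBall.mem_iff.1 (Filter.inter_mem hs hv)
  let M : ℝ := K + K ^ 2 + 1
  have hM : 0 < M := by positivity
  refine ⟨3 / 2 * (K * (K + K ^ 2)) + K ^ 3 / 2, by positivity, min 1 (r / M), by positivity, ?_⟩
  rintro h ⟨h_pos, h_lt⟩ θ rfl hθ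
  have hh : h ∈ Icc 0 1 := ⟨h_pos.le, (h_lt.trans_le (min_le_left _ _)).le⟩
  have hMh : M * h ≤ r := ((lt_div_iff₀' hM).1 (h_lt.trans_le (min_le_right _ _))).le
  have speed_lt : ∀ y ∈ closedBall (θ 0) r, ‖v h y‖ < M := fun y hy ↦ by
    rw [(hball hy).2 h]
    exact (hfs.norm_eulerModifiedField_le (hball hy).1 hh).trans_lt (lt_add_one _)
  have trapped : MapsTo θ (Icc 0 h) (closedBall (θ 0) r) := fun t ht ↦ by
    refine mem_closedBall_iff_norm.2 ?_
    calc ‖θ t - θ 0‖ ≤ M * (t - 0) :=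
          norm_integralCurve_sub_le_of_norm_lt_on_closedBall hθ hM.le (fun _ _ ↦ speed_lt)
            (by rwa [sub_zero]) ht
      _ ≤ M * h := by rw [sub_zero]; gcongr; exact ht.2
      _ ≤ r := hMh
  refine hfs.norm_sub_eulerStep_le hh (fun t ht ↦ (hball (trapped ht)).1) fun t ht ↦ ?_
  simpa only [(hball (trapped ht)).2 h] using hθ t ht

end EulerMethod

section Gradient

variable {E : Type*} [NormedAddCommGroup E] [InnerProductSpace ℝ E] [CompleteSpace E]
  {L : E → ℝ} {x : E}

theorem contDiffAt_gradient {m n : WithTop ℕ∞} (hL : ContDiffAt ℝ n L x) (hmn : m + 1 ≤ n) :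
    ContDiffAt ℝ m (gradient L) x :=
  let riesz : StrongDual ℝ E ≃ₗᵢ[ℝ] E := (InnerProductSpace.toDual ℝ E).symm
  riesz.contDiff.contDiffAt.comp x (hL.fderiv_right hmn)

theorem inner_fderiv_gradient_left (hL : ContDiffAt ℝ 2 L x) (v w : E) :
    inner ℝ (fderiv ℝ (gradient L) x v) w = fderiv ℝ (fderiv ℝ L) x v w := by
  have gradient_diff : DifferentiableAt ℝ (gradient L) x :=
    (contDiffAt_gradient (m := 1) hL (by norm_num)).differentiableAt one_ne_zero
  have fderiv_diff : DifferentiableAt ℝ (fderiv ℝ L) x :=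
    (hL.fderiv_right (m := 1) (by norm_num)).differentiableAt one_ne_zero
  calc inner ℝ (fderiv ℝ (gradient L) x v) w
      = fderiv ℝ (fun y ↦ inner ℝ (gradient L y) w) x v := by
        rw [fderiv_inner_apply ℝ gradient_diff (differentiableAt_const w)]
        simp
    _ = fderiv ℝ (fun y ↦ fderiv ℝ L y w) x v := by simp only [inner_gradient_left]
    _ = fderiv ℝ (fderiv ℝ L) x v w := by
        rw [fderiv_clm_apply fderiv_diff (differentiableAt_const w)]
        simp

theorem inner_fderiv_gradient_comm (hL : ContDiffAt ℝ 2 L x) (v w : E) :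
    inner ℝ (fderiv ℝ (gradient L) x v) w = inner ℝ (fderiv ℝ (gradient L) x w) v := by
  rw [inner_fderiv_gradient_left hL, inner_fderiv_gradient_left hL,
    (hL.isSymmSndFDerivAt (by simp)).eq]

theorem gradient_norm_gradient_sq (hL : ContDiffAt ℝ 2 L x) :
    gradient (fun y ↦ ‖gradient L y‖ ^ 2) x =
      (2 : ℝ) • fderiv ℝ (gradient L) x (gradient L x) := by
  have gradient_diff : DifferentiableAt ℝ (gradient L) x :=
    (contDiffAt_gradient (m := 1) hL (by norm_num)).differentiableAt one_ne_zero
  refine ext_inner_right ℝ fun w ↦ ?_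
  rw [inner_gradient_left, gradient_diff.hasFDerivAt.norm_sq.fderiv, real_inner_smul_left,
    inner_fderiv_gradient_comm hL, real_inner_comm]
  simp

theorem eulerModifiedField_neg_gradient (hL : ContDiffAt ℝ 2 L x) (h : ℝ) :
    eulerModifiedField (-gradient L) h x =
      -gradient L x - (h / 4) • gradient (fun y ↦ ‖gradient L y‖ ^ 2) x := by
  rw [gradient_norm_gradient_sq hL, eulerModifiedField, flowAcceleration, fderiv_neg]
  simp only [Pi.neg_apply, neg_apply, map_neg, neg_neg]
  module

theorem single_step_modified_flow_drift_general {θ₀ : E} (hL : ContDiffAt ℝ 3 L θ₀) :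
    ∃ C > 0, ∃ h₀ > 0, ∀ h ∈ Ioo 0 h₀, ∀ θ : ℝ → E, θ 0 = θ₀ →
      IsIntegralCurveOn θ
        (fun _ y ↦ -gradient L y - (h / 4) • gradient (fun z ↦ ‖gradient L z‖ ^ 2) y) (Icc 0 h) →
      ‖θ h - (θ₀ - h • gradient L θ₀)‖ ≤ C * h ^ 3 := by
  have contDiffAt_near : ∀ᶠ y in 𝓝 θ₀, ContDiffAt ℝ 2 L y :=
    (hL.of_le (by norm_num)).eventually (by simp)
  simpa only [Pi.neg_apply, smul_neg, ← sub_eq_add_neg] using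
    exists_norm_modifiedFlow_sub_eulerStep_le (contDiffAt_gradient hL (by norm_num)).neg
      (contDiffAt_near.mono fun y hy h ↦ (eulerModifiedField_neg_gradient hy h).symm)

end Gradient

/-- **Backward error analysis for a single gradient descent step.**
If `L : ℝⁿ → ℝ` is C³ with bounded first, second and third derivatives, `θ'` is the
gradient descent iterate `θ₀ - h ∇L(θ₀)`, and for each `h > 0` the curve `θt h` solves the
modified gradient flow `θ̇ = -∇L(θ) - (h/4) ∇(‖∇L(θ)‖²)` with initial condition `θ₀`,
then the discretization drift `‖θt h h - θ' h‖` is of order `O(h³)`. -/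
theorem single_step_modified_flow_drift {n : ℕ}
    (L : EuclideanSpace ℝ (Fin n) → ℝ)
    (hL : ContDiff ℝ 3 L)
    (K : ℝ)
    (hbound : ∀ i : ℕ, 1 ≤ i → i ≤ 3 → ∀ x, ‖iteratedFDeriv ℝ i L x‖ ≤ K)
    (θ₀ : EuclideanSpace ℝ (Fin n))
    (θ' : ℝ → EuclideanSpace ℝ (Fin n))
    (hθ' : ∀ h : ℝ, θ' h = θ₀ - h • gradient L θ₀)
    (θt : ℝ → ℝ → EuclideanSpace ℝ (Fin n))
    (hinit : ∀ h : ℝ, 0 < h → θt h 0 = θ₀)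
    (hode : ∀ h : ℝ, 0 < h → ∀ t ∈ Icc (0 : ℝ) h,
      HasDerivAt (θt h)
        (-(gradient L (θt h t))
          - (h / 4) • gradient (fun θ => ‖gradient L θ‖ ^ 2) (θt h t)) t) :
    ∃ C > (0 : ℝ), ∃ h₀ > (0 : ℝ), ∀ h ∈ Ioo (0 : ℝ) h₀,
      ‖θt h h - θ' h‖ ≤ C * h ^ 3 := by
  obtain ⟨C, hC, h₀, hh₀, drift_le⟩ :=
    single_step_modified_flow_drift_general (hL.contDiffAt (x := θ₀))
  exact ⟨C, hC, h₀, hh₀, fun h hh ↦ hθ' h ▸ drift_le h hh (θt h) (hinit h hh.1)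
    fun t ht ↦ (hode h hh.1 t ht).hasDerivWithinAt⟩
end

section
/- Let H₀ : ℝ^n → ℝ^n be twice continuously differentiable with bounded derivatives and H₁ : ℝ^n → ℝ^n continuously differentiable with bounded derivative. Fix θ₀ ∈ ℝ^n and for each h > 0 let θ_h solve the ODE θ̇(t) = H₀(θ(t)) + h H₁(θ(t)) with θ_h(0) = θ₀. Then θ_h(h) = θ₀ + h H₀(θ₀) + h² ( H₁(θ₀) + (1/2) DH₀(θ₀) H₀(θ₀) ) + R(h), where DH₀(θ₀) is the Jacobian of H₀ at θ₀ and ‖R(h)‖ ≤ C h³ for some constant C > 0 and all sufficiently small h > 0. -/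
open Set

/-!
All estimates are uniform in `0 ≤ t ≤ h`. The field is bounded near `θ₀`, so `θ_h(t)` cannot leave
a small ball around `θ₀` before time `h`, and `θ_h(t) - θ₀ = O(h)`. If a curve starts at `θ₀` and
its velocity agrees with that of `θ_h` up to `O(h^k)`, then the curve agrees with `θ_h` up to
`O(h^(k+1))`; this is used twice. The velocity is `H₀(θ₀) + O(h)`, so
`θ_h(t) = θ₀ + t H₀(θ₀) + O(h²)`; inserting this in the first order Taylor formula for `H₀` at `θ₀`
gives the velocity up to `O(h²)`, and hence `θ_h` up to `O(h³)`.
-/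

section

open Filter Topology Asymptotics Metric

theorem exists_forall_Ioo_norm_le_of_isBigO_pow {F : Type*} [SeminormedAddCommGroup F] {f : ℝ → F}
    {k : ℕ} (hf : f =O[𝓝[>] 0] fun h => h ^ k) :
    ∃ C > (0 : ℝ), ∃ h₀ > (0 : ℝ), ∀ h ∈ Ioo 0 h₀, ‖f h‖ ≤ C * h ^ k := by
  obtain ⟨C, C_pos, hC⟩ := hf.exists_pos
  obtain ⟨h₀, h₀_pos, hsub⟩ := mem_nhdsGT_iff_exists_Ioo_subset.1 hC.bound
  refine ⟨C, C_pos, h₀, h₀_pos, fun h hh => (hsub hh).trans_eq ?_⟩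
  rw [norm_pow, Real.norm_of_nonneg hh.1.le]

variable {E : Type*} [NormedAddCommGroup E] [NormedSpace ℝ E]

theorem isBigO_sub_sub_fderiv_of_differentiableAt_fderiv {F : Type*} [NormedAddCommGroup F]
    [NormedSpace ℝ F] {f : E → F} {a : E} (hf : ∀ᶠ x in 𝓝 a, DifferentiableAt ℝ f x)
    (hf' : DifferentiableAt ℝ (fderiv ℝ f) a) :
    (fun x => f x - f a - fderiv ℝ f a (x - a)) =O[𝓝 a] fun x => ‖x - a‖ ^ 2 := by
  obtain ⟨C, C_pos, hC⟩ := hf'.isBigO_sub.exists_pos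
  obtain ⟨r, r_pos, hr⟩ := eventually_nhds_iff_ball.1 (hf.and hC.bound)
  refine IsBigO.of_bound C (eventually_of_mem (ball_mem_nhds a r_pos) fun x hx => ?_)
  have closedBall_sub : closedBall a ‖x - a‖ ⊆ ball a r :=
    closedBall_subset_ball (mem_ball_iff_norm.1 hx)
  have fderiv_near : ∀ z ∈ closedBall a ‖x - a‖, ‖fderiv ℝ f z - fderiv ℝ f a‖ ≤ C * ‖x - a‖ :=
    fun z hz => (hr z (closedBall_sub hz)).2.trans <|
      mul_le_mul_of_nonneg_left (mem_closedBall_iff_norm.1 hz) C_pos.le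
  calc ‖f x - f a - fderiv ℝ f a (x - a)‖ ≤ C * ‖x - a‖ * ‖x - a‖ :=
        (convex_closedBall a _).norm_image_sub_le_of_norm_fderiv_le'
          (fun z hz => (hr z (closedBall_sub hz)).1) fderiv_near
          (mem_closedBall_self (norm_nonneg _)) (mem_closedBall_iff_norm.2 le_rfl)
    _ = C * ‖‖x - a‖ ^ 2‖ := by rw [norm_pow, norm_norm]; ring

theorem hasDerivAt_add_smul_add_sq_div_two_smul (a b c : E) (t : ℝ) :
    HasDerivAt (fun s : ℝ => a + s • b + (s ^ 2 / 2) • c) (b + t • c) t := by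
  have linear := ((hasDerivAt_id t).smul_const b).const_add a
  simpa using linear.fun_add (((hasDerivAt_pow 2 t).div_const 2).smul_const c)

theorem norm_sub_le_of_norm_deriv_lt_on_ball {f f' : ℝ → E} {a b r M : ℝ}
    (hf : ∀ t ∈ Icc a b, HasDerivWithinAt f (f' t) (Icc a b) t) (hM : 0 ≤ M)
    (hr : M * (b - a) < r) (bound : ∀ t ∈ Ico a b, f t ∈ ball (f a) r → ‖f' t‖ < M) :
    ∀ t ∈ Icc a b, ‖f t - f a‖ ≤ M * (t - a) := by
  refine image_norm_le_of_norm_deriv_right_lt_deriv_boundary (f := fun t => f t - f a) (f' := f')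
    (B := fun t => M * (t - a)) (B' := fun _ => M)
    (fun t ht => ((hf t ht).sub_const _).continuousWithinAt)
    (fun t ht => ((hf t (Ico_subset_Icc_self ht)).sub_const _).mono_of_mem_nhdsWithin
      (Icc_mem_nhdsGE_of_mem ht))
    (by simp) (fun t => by simpa using ((hasDerivAt_id t).sub_const a).const_mul M) ?_
  intro t ht on_fence
  refine bound t ht (mem_ball_iff_norm.2 ?_)
  calc ‖f t - f a‖ = M * (t - a) := on_fence
    _ ≤ M * (b - a) := by gcongr; exact ht.2.le
    _ < r := hr

/-- The filter of pairs `(h, t)` with `0 ≤ t ≤ h` and `h → 0⁺`. Asymptotics along it are estimates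
as `h → 0⁺` that are uniform in `t ∈ [0, h]`. -/
def shrinkingTimes : Filter (ℝ × ℝ) :=
  comap Prod.fst (𝓝[>] 0) ⊓ 𝓟 {p | p.2 ∈ Icc 0 p.1}

namespace shrinkingTimes

theorem eventually_iff {P : ℝ × ℝ → Prop} :
    (∀ᶠ p in shrinkingTimes, P p) ↔ ∀ᶠ h in 𝓝[>] 0, ∀ t ∈ Icc 0 h, P (h, t) := by
  simp only [shrinkingTimes, eventually_inf_principal, eventually_comap, Prod.forall, mem_ofPred_eq]
  refine eventually_congr (Eventually.of_forall fun h => ?_)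
  exact ⟨fun H t => H h t rfl, fun H _ t hh => hh ▸ H t⟩

theorem tendsto_fst : Tendsto Prod.fst shrinkingTimes (𝓝 (0 : ℝ)) :=
  (tendsto_comap.mono_left inf_le_left).mono_right nhdsWithin_le_nhds

theorem tendsto_diag : Tendsto (fun h : ℝ => (h, h)) (𝓝[>] 0) shrinkingTimes :=
  tendsto_iff_eventually.2 fun _ hP =>
    ((eventually_iff.1 hP).and eventually_mem_nhdsWithin).mono fun h hh =>
      hh.1 h ⟨(mem_Ioi.1 hh.2).le, le_rfl⟩

theorem isBigO_of_hasDerivWithinAt {f f' : ℝ → ℝ → E} {k : ℕ}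
    (hf₀ : ∀ᶠ h in 𝓝[>] 0, f h 0 = 0)
    (hf : ∀ᶠ h in 𝓝[>] 0, ∀ t ∈ Icc 0 h, HasDerivWithinAt (f h) (f' h t) (Icc 0 h) t)
    (hf' : (fun p => f' p.1 p.2) =O[shrinkingTimes] fun p => p.1 ^ k) :
    (fun p => f p.1 p.2) =O[shrinkingTimes] fun p => p.1 ^ (k + 1) := by
  obtain ⟨C, C_pos, hC⟩ := hf'.exists_pos
  refine IsBigO.of_bound C (eventually_iff.2 ?_)
  filter_upwards [hf₀, hf, eventually_iff.1 hC.bound] with h init deriv bound t ht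
  have mean_value := norm_image_sub_le_of_norm_deriv_le_segment' deriv
    (fun s hs => bound s (Ico_subset_Icc_self hs)) t ht
  rw [init, sub_zero, sub_zero] at mean_value
  calc ‖f h t‖ ≤ C * ‖h ^ k‖ * t := mean_value
    _ ≤ C * ‖h ^ k‖ * ‖h‖ := by gcongr; exact ht.2.trans (le_abs_self h)
    _ = C * ‖h ^ (k + 1)‖ := by rw [pow_succ, norm_mul, mul_assoc]

end shrinkingTimes

/-- `θ h` solves `θ̇ = V h θ` on `[0, h]` with `θ h 0 = θ₀`, for all sufficiently small `h > 0`. -/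
def IsShortTimeSolution (V : ℝ → E → E) (θ₀ : E) (θ : ℝ → ℝ → E) : Prop :=
  ∀ᶠ h in 𝓝[>] 0,
    θ h 0 = θ₀ ∧ ∀ t ∈ Icc 0 h, HasDerivWithinAt (θ h) (V h (θ h t)) (Icc 0 h) t

namespace IsShortTimeSolution

variable {V : ℝ → E → E} {θ₀ : E} {θ : ℝ → ℝ → E}

theorem isBigO_sub_initial (hθ : IsShortTimeSolution V θ₀ θ)
    (hV : ContinuousAt (fun p : ℝ × E => V p.1 p.2) (0, θ₀)) :
    (fun p => θ p.1 p.2 - θ₀) =O[shrinkingTimes] Prod.fst := by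
  set M : ℝ := ‖V 0 θ₀‖ + 1
  have M_pos : 0 < M := by positivity
  have V_lt : ∀ᶠ p : ℝ × E in 𝓝 (0, θ₀), ‖V p.1 p.2‖ < M :=
    hV.norm.eventually_lt_const (lt_add_one _)
  obtain ⟨r, r_pos, V_lt⟩ := eventually_nhds_iff_ball.1 V_lt
  have h_lt : ∀ᶠ h : ℝ in 𝓝[>] 0, h < r :=
    eventually_nhdsWithin_of_eventually_nhds (eventually_lt_nhds r_pos)
  have Mh_lt : ∀ᶠ h : ℝ in 𝓝[>] 0, h < r / M :=
    eventually_nhdsWithin_of_eventually_nhds (eventually_lt_nhds (div_pos r_pos M_pos))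
  refine IsBigO.of_bound M (shrinkingTimes.eventually_iff.2 ?_)
  filter_upwards [hθ, h_lt, Mh_lt, eventually_mem_nhdsWithin]
    with h ⟨init, ode⟩ h_lt Mh_lt (h_pos : 0 < h) t ht
  have h_mem : h ∈ ball 0 r := by rwa [mem_ball_zero_iff, Real.norm_of_nonneg h_pos.le]
  have fence := norm_sub_le_of_norm_deriv_lt_on_ball ode M_pos.le
    (by rwa [sub_zero, ← lt_div_iff₀' M_pos])
    (fun s _ hs => V_lt (h, θ h s) (ball_prod_same (0 : ℝ) θ₀ r ▸ ⟨h_mem, init ▸ hs⟩)) t ht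
  rw [init, sub_zero] at fence
  exact fence.trans (by gcongr; exact ht.2.trans (le_abs_self h))

theorem isBigO_sub_of_velocity (hθ : IsShortTimeSolution V θ₀ θ) {q q' : ℝ → ℝ → E} {k : ℕ}
    (hq₀ : ∀ h, q h 0 = θ₀) (hq : ∀ h t, HasDerivAt (q h) (q' h t) t)
    (hV : (fun p => V p.1 (θ p.1 p.2) - q' p.1 p.2) =O[shrinkingTimes] fun p => p.1 ^ k) :
    (fun p => θ p.1 p.2 - q p.1 p.2) =O[shrinkingTimes] fun p => p.1 ^ (k + 1) :=
  shrinkingTimes.isBigO_of_hasDerivWithinAt (f := fun h t => θ h t - q h t)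
    (hθ.mono fun h hh => by rw [hh.1, hq₀, sub_self])
    (hθ.mono fun h hh t ht => (hh.2 t ht).sub (hq h t).hasDerivWithinAt) hV

end IsShortTimeSolution

section ModifiedField

variable {α : Type*} {l : Filter α} {h t : α → ℝ} {x : α → E} {H₀ H₁ : E → E} {θ₀ : E}

theorem isBigO_modifiedField_sub (hH₀ : DifferentiableAt ℝ H₀ θ₀) (hH₁ : ContinuousAt H₁ θ₀)
    (hh : Tendsto h l (𝓝 0)) (hx : (fun a => x a - θ₀) =O[l] h) :
    (fun a => H₀ (x a) + h a • H₁ (x a) - H₀ θ₀) =O[l] h := by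
  have x_tendsto : Tendsto x l (𝓝 θ₀) := tendsto_sub_nhds_zero_iff.1 (hx.trans_tendsto hh)
  have H₀_part : (fun a => H₀ (x a) - H₀ θ₀) =O[l] h :=
    (hH₀.isBigO_sub.comp_tendsto x_tendsto).trans hx
  have H₁_part : (fun a => h a • H₁ (x a)) =O[l] h := by
    simpa using (isBigO_refl h l).smul ((hH₁.tendsto.comp x_tendsto).isBigO_one ℝ)
  exact (H₀_part.add H₁_part).congr_left fun a => by abel

theorem isBigO_modifiedField_sub_linear (hH₀ : ∀ᶠ y in 𝓝 θ₀, DifferentiableAt ℝ H₀ y)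
    (hH₀' : DifferentiableAt ℝ (fderiv ℝ H₀) θ₀) (hH₁ : DifferentiableAt ℝ H₁ θ₀)
    (hh : Tendsto h l (𝓝 0)) (hx : (fun a => x a - θ₀) =O[l] h)
    (hx' : (fun a => x a - (θ₀ + t a • H₀ θ₀)) =O[l] fun a => h a ^ 2) :
    (fun a => H₀ (x a) + h a • H₁ (x a) -
      (H₀ θ₀ + h a • H₁ θ₀ + t a • fderiv ℝ H₀ θ₀ (H₀ θ₀))) =O[l] fun a => h a ^ 2 := by
  have x_tendsto : Tendsto x l (𝓝 θ₀) := tendsto_sub_nhds_zero_iff.1 (hx.trans_tendsto hh)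
  have taylor_part :
      (fun a => H₀ (x a) - H₀ θ₀ - fderiv ℝ H₀ θ₀ (x a - θ₀)) =O[l] fun a => h a ^ 2 :=
    ((isBigO_sub_sub_fderiv_of_differentiableAt_fderiv hH₀ hH₀').comp_tendsto x_tendsto).trans
      (hx.norm_left.pow 2)
  have position_part :
      (fun a => fderiv ℝ H₀ θ₀ (x a - (θ₀ + t a • H₀ θ₀))) =O[l] fun a => h a ^ 2 :=
    ((fderiv ℝ H₀ θ₀).isBigO_comp _ _).trans hx'
  have H₁_part : (fun a => h a • (H₁ (x a) - H₁ θ₀)) =O[l] fun a => h a ^ 2 := by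
    have H₁_sub : (fun a => H₁ (x a) - H₁ θ₀) =O[l] h :=
      (hH₁.isBigO_sub.comp_tendsto x_tendsto).trans hx
    simpa only [smul_eq_mul, ← sq] using (isBigO_refl h l).smul H₁_sub
  refine ((taylor_part.add position_part).add H₁_part).congr_left fun a => ?_
  simp only [map_sub, map_add, map_smul]
  module

end ModifiedField

theorem generic_modified_equation_expansion_general {H₀ H₁ : E → E} {θ₀ : E} {θt : ℝ → ℝ → E}
    (hH₀ : ContDiffAt ℝ 2 H₀ θ₀) (hH₁ : DifferentiableAt ℝ H₁ θ₀)
    (hinit : ∀ᶠ h in 𝓝[>] 0, θt h 0 = θ₀)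
    (hode : ∀ᶠ h in 𝓝[>] 0, ∀ t ∈ Icc 0 h,
      HasDerivWithinAt (θt h) (H₀ (θt h t) + h • H₁ (θt h t)) (Icc 0 h) t) :
    (fun h => θt h h - (θ₀ + h • H₀ θ₀
        + h ^ 2 • (H₁ θ₀ + (1 / 2 : ℝ) • fderiv ℝ H₀ θ₀ (H₀ θ₀)))) =O[𝓝[>] 0]
      fun h => h ^ 3 := by
  have solution : IsShortTimeSolution (fun h x => H₀ x + h • H₁ x) θ₀ θt := hinit.and hode
  have H₀_differentiable : ∀ᶠ x in 𝓝 θ₀, DifferentiableAt ℝ H₀ x :=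
    (hH₀.eventually (by simp)).mono fun x hx => hx.differentiableAt two_ne_zero
  have fderiv_differentiable : DifferentiableAt ℝ (fderiv ℝ H₀) θ₀ :=
    (hH₀.fderiv_right (m := 1) le_rfl).differentiableAt one_ne_zero
  have field_continuousAt : ContinuousAt (fun p : ℝ × E => H₀ p.2 + p.1 • H₁ p.2) (0, θ₀) := by
    have := hH₀.continuousAt
    have := hH₁.continuousAt
    fun_prop
  have position₁ := solution.isBigO_sub_initial field_continuousAt
  have velocity₁ := isBigO_modifiedField_sub H₀_differentiable.self_of_nhds hH₁.continuousAt
    shrinkingTimes.tendsto_fst position₁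
  have position₂ : (fun p => θt p.1 p.2 - (θ₀ + p.2 • H₀ θ₀)) =O[shrinkingTimes] (·.1 ^ 2) :=
    solution.isBigO_sub_of_velocity (q := fun _ t => θ₀ + t • H₀ θ₀) (q' := fun _ _ => H₀ θ₀)
      (fun _ => by simp)
      (fun _ t => by simpa using hasDerivAt_add_smul_add_sq_div_two_smul θ₀ (H₀ θ₀) 0 t)
      (by simpa only [pow_one] using velocity₁)
  have velocity₂ := isBigO_modifiedField_sub_linear H₀_differentiable fderiv_differentiable hH₁
    shrinkingTimes.tendsto_fst position₁ position₂
  have position₃ := solution.isBigO_sub_of_velocity (fun _ => by simp)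
    (fun h => hasDerivAt_add_smul_add_sq_div_two_smul θ₀ (H₀ θ₀ + h • H₁ θ₀)
      (fderiv ℝ H₀ θ₀ (H₀ θ₀))) velocity₂
  refine (position₃.comp_tendsto shrinkingTimes.tendsto_diag).congr_left fun h => ?_
  simp only [Function.comp_apply]
  module

end

/-- **Taylor expansion of the solution of a generic modified equation.**
If `H₀ : ℝⁿ → ℝⁿ` is C² with bounded derivatives, `H₁` is C¹ with bounded derivative,
and for each `h > 0` the curve `θt h` solves `θ̇ = H₀(θ) + h H₁(θ)` with `θt h 0 = θ₀`,
then `θt h h = θ₀ + h H₀(θ₀) + h² (H₁(θ₀) + (1/2) DH₀(θ₀) H₀(θ₀)) + O(h³)`. -/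
theorem generic_modified_equation_expansion {n : ℕ}
    (H₀ H₁ : EuclideanSpace ℝ (Fin n) → EuclideanSpace ℝ (Fin n))
    (hH₀ : ContDiff ℝ 2 H₀)
    (K₀ : ℝ)
    (hb₀ : ∀ i : ℕ, 1 ≤ i → i ≤ 2 → ∀ x, ‖iteratedFDeriv ℝ i H₀ x‖ ≤ K₀)
    (hH₁ : ContDiff ℝ 1 H₁)
    (K₁ : ℝ)
    (hb₁ : ∀ x, ‖fderiv ℝ H₁ x‖ ≤ K₁)
    (θ₀ : EuclideanSpace ℝ (Fin n))
    (θt : ℝ → ℝ → EuclideanSpace ℝ (Fin n))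
    (hinit : ∀ h : ℝ, 0 < h → θt h 0 = θ₀)
    (hode : ∀ h : ℝ, 0 < h → ∀ t ∈ Icc (0 : ℝ) h,
      HasDerivAt (θt h) (H₀ (θt h t) + h • H₁ (θt h t)) t) :
    ∃ C > (0 : ℝ), ∃ h₀ > (0 : ℝ), ∀ h ∈ Ioo (0 : ℝ) h₀,
      ‖θt h h -
          (θ₀ + h • H₀ θ₀
            + h ^ 2 • (H₁ θ₀ + (1 / 2 : ℝ) • fderiv ℝ H₀ θ₀ (H₀ θ₀)))‖
        ≤ C * h ^ 3 := by
  exact exists_forall_Ioo_norm_le_of_isBigO_pow <| generic_modified_equation_expansion_general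
    hH₀.contDiffAt (hH₁.differentiable one_ne_zero θ₀) (eventually_mem_nhdsWithin.mono hinit)
    (eventually_mem_nhdsWithin.mono fun h hh t ht => (hode h hh t ht).hasDerivWithinAt)
end
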